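/- Let S be a Seidel matrix of odd order n with exactly three distinct eigenvalues, at least one of which is irrational. Then the spectrum of S is {[−√n]^{(n−1)/2}, [0]^1, [√n]^{(n−1)/2}}. -/

import Mathlib

def IsSeidel {n : ℕ} (S : Matrix (Fin n) (Fin n) ℝ) : Prop :=
  S.IsSymm ∧ (∀ i, S i i = 0) ∧ ∀ i j, i ≠ j → S i j = 1 ∨ S i j = -1

open Polynomial

/-!
The irrational eigenvalue has a minimal polynomial `f` over `ℤ` of degree at least two, so three
distinct eigenvalues leave room only for a characteristic polynomial `P = f ^ m` with `f` cubic, or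
`P = (X ^ 2 + p X + q) ^ m (X - t) ^ a`. Modulo two a Seidel matrix is `J - 1`, and for odd `n` this
gives `P ≡ X (X + 1) ^ (n - 1)`, in which `0` is a simple root. In the cubic case `m = 1`, hence
`n = 3`, but every Seidel matrix of order three has integral spectrum. In the quadratic case, either
`m = 1` and `t` is odd, or `a = 1` and `p` is even. The traces of `S` and `S ^ 2` determine
`p ^ 2 - 4 q > 0` from the other parameters. In the first case it comes out as
`(a + 2) (2 (a + 1) - a t ^ 2)`, whose positivity forces `t ^ 2 = 1`, so it is the square
`(a + 2) ^ 2`, against irrationality. In the second it is `(2 m + 1) (4 - p ^ 2)`, so `p = 0` and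
`P = X (X ^ 2 - n) ^ m`.
-/

section MinimalPolynomial

variable {R K : Type*} [CommRing R] [IsDomain R] [Field K] [Algebra R K]
  [Module.IsTorsionFree R K]

lemma eq_one_of_splits_of_rootSet_eq_empty {g : R[X]} (hg : g.Monic)
    (hs : (g.map (algebraMap R K)).Splits) (h0 : g.rootSet K = ∅) : g = 1 := by
  by_contra hne
  have hdeg : (g.map (algebraMap R K)).degree ≠ 0 := by
    rw [hg.degree_map]
    exact fun h ↦ hne (hg.degree_le_zero_iff_eq_one.1 h.le)
  obtain ⟨θ, hθ⟩ := hs.exists_eval_eq_zero hdeg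
  rw [eval_map_algebraMap] at hθ
  exact (h0 ▸ (mem_rootSet_of_ne hg.ne_zero).2 hθ : θ ∈ (∅ : Set K))

variable [IsIntegrallyClosed R]

lemma minpoly_eq_of_aeval_minpoly_eq_zero {x y : K} (hx : IsIntegral R x)
    (hy : aeval y (minpoly R x) = 0) : minpoly R y = minpoly R x := by
  have hy' : IsIntegral R y := ⟨minpoly R x, minpoly.monic hx, hy⟩
  exact eq_of_monic_of_associated (minpoly.monic hy') (minpoly.monic hx) <|
    (minpoly.irreducible hy').associated_of_dvd (minpoly.irreducible hx)
      (minpoly.isIntegrallyClosed_dvd hy' hy)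

lemma exists_eq_minpoly_pow_mul {x : K} {P : R[X]} (hP : P.Monic) (hx : aeval x P = 0) :
    ∃ (m : ℕ) (g : R[X]), 0 < m ∧ g.Monic ∧ P = minpoly R x ^ m * g ∧ aeval x g ≠ 0 := by
  have hint : IsIntegral R x := ⟨P, hP, hx⟩
  have hfin : FiniteMultiplicity (minpoly R x) P :=
    finiteMultiplicity_of_degree_pos_of_monic (minpoly.degree_pos hint) (minpoly.monic hint)
      hP.ne_zero
  obtain ⟨g, hPg, hg⟩ := hfin.exists_eq_pow_mul_and_not_dvd
  exact ⟨multiplicity (minpoly R x) P, g,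
    multiplicity_pos_of_dvd (minpoly.isIntegrallyClosed_dvd hint hx),
    ((minpoly.monic hint).pow _).of_mul_monic_left (hPg ▸ hP), hPg,
    fun h ↦ hg (minpoly.isIntegrallyClosed_dvd hint h)⟩

lemma disjoint_rootSet_minpoly {x : K} (hx : IsIntegral R x) {g : R[X]} (hg : aeval x g ≠ 0) :
    Disjoint ((minpoly R x).rootSet K) (g.rootSet K) := by
  refine Set.disjoint_left.2 fun y hyf hyg ↦ hg ?_
  have hyx : aeval y (minpoly R x) = 0 := aeval_eq_zero_of_mem_rootSet hyf
  have hdvd : minpoly R y ∣ g := minpoly.isIntegrallyClosed_dvd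
    ⟨minpoly R x, minpoly.monic hx, hyx⟩ (aeval_eq_zero_of_mem_rootSet hyg)
  rw [minpoly_eq_of_aeval_minpoly_eq_zero hx hyx] at hdvd
  exact aeval_eq_zero_of_dvd_aeval_eq_zero hdvd (minpoly.aeval R x)

variable [CharZero K]

lemma separable_map_minpoly {x : K} (hx : IsIntegral R x) :
    ((minpoly R x).map (algebraMap R K)).Separable := by
  let := FractionRing.liftAlgebra R K
  have : CharZero (FractionRing R) := (algebraMap (FractionRing R) K).charZero
  have hirr := minpoly.irreducible (hx.tower_top (A := FractionRing R))
  rw [minpoly.isIntegrallyClosed_eq_field_fractions' (FractionRing R) hx] at hirr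
  rw [IsScalarTower.algebraMap_eq R (FractionRing R) K, ← Polynomial.map_map]
  exact hirr.separable.map

lemma ncard_rootSet_minpoly {x : K} (hx : IsIntegral R x)
    (hs : ((minpoly R x).map (algebraMap R K)).Splits) :
    ((minpoly R x).rootSet K).ncard = (minpoly R x).natDegree := by
  classical
  rw [rootSet_def, Set.ncard_coe_finset,
    Multiset.toFinset_card_of_nodup (nodup_roots (separable_map_minpoly hx)),
    ← hs.natDegree_eq_card_roots, (minpoly.monic hx).natDegree_map]

lemma ncard_rootSet_minpoly_pow_mul {x : K} (hx : IsIntegral R x)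
    (hs : ((minpoly R x).map (algebraMap R K)).Splits) {m : ℕ} (hm : m ≠ 0) {g : R[X]}
    (hg0 : g.Monic) (hg : aeval x g ≠ 0) :
    ((minpoly R x ^ m * g).rootSet K).ncard =
      (minpoly R x).natDegree + (g.rootSet K).ncard := by
  have hunion : (minpoly R x ^ m * g).rootSet K = (minpoly R x).rootSet K ∪ g.rootSet K := by
    ext y
    simp [mem_rootSet_of_ne, minpoly.ne_zero hx, hg0.ne_zero, hm]
  rw [hunion, Set.ncard_union_eq (disjoint_rootSet_minpoly hx hg), ncard_rootSet_minpoly hx hs]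

lemma exists_eq_X_sub_C_pow_of_ncard_rootSet_eq_one {g : R[X]} (hg : g.Monic)
    (hs : (g.map (algebraMap R K)).Splits) (h1 : (g.rootSet K).ncard = 1) :
    ∃ (a : ℕ) (t : R), 0 < a ∧ g = (X - C t) ^ a := by
  obtain ⟨θ, hθ⟩ := Set.ncard_eq_one.1 h1
  have hθg : aeval θ g = 0 := aeval_eq_zero_of_mem_rootSet (hθ ▸ rfl)
  have hint : IsIntegral R θ := ⟨g, hg, hθg⟩
  have hdvd : minpoly R θ ∣ g := minpoly.isIntegrallyClosed_dvd hint hθg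
  have hθs : ((minpoly R θ).map (algebraMap R K)).Splits :=
    hs.of_dvd (hg.map _).ne_zero (Polynomial.map_dvd _ hdvd)
  have hle : (minpoly R θ).natDegree ≤ 1 := by
    rw [← ncard_rootSet_minpoly hint hθs, ← h1]
    refine Set.ncard_le_ncard fun y hy ↦ (mem_rootSet_of_ne hg.ne_zero).2 ?_
    exact aeval_eq_zero_of_dvd_aeval_eq_zero hdvd (aeval_eq_zero_of_mem_rootSet hy)
  obtain ⟨t, rfl⟩ := (minpoly.natDegree_eq_one_iff (A := R) (x := θ)).1
    (hle.antisymm (minpoly.natDegree_pos hint))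
  have hroots : g.aroots K = .replicate (g.aroots K).card (algebraMap R K t) := by
    refine Multiset.eq_replicate_card.2 fun y hy ↦ ?_
    have : y ∈ g.rootSet K := by classical simpa [rootSet_def] using hy
    simpa [hθ] using this
  refine ⟨(g.aroots K).card, t, Multiset.card_pos_iff_exists_mem.2 ⟨algebraMap R K t, ?_⟩,
    map_injective _ (FaithfulSMul.algebraMap_injective R K) ?_⟩
  · exact mem_aroots.2 ⟨hg.ne_zero, hθg⟩
  · rw [aroots_def] at hroots
    rw [hs.eq_prod_roots_of_monic (hg.map _), hroots]
    simp

lemma eq_minpoly_pow_or_eq_minpoly_pow_mul_X_sub_C_pow {P : R[X]} (hP : P.Monic)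
    (hs : (P.map (algebraMap R K)).Splits) (h3 : (P.rootSet K).ncard = 3) {x : K}
    (hx : aeval x P = 0) (hxR : x ∉ (algebraMap R K).range) :
    (∃ m, P = minpoly R x ^ m ∧ (minpoly R x).natDegree = 3) ∨
      ∃ (m a : ℕ) (t : R), 0 < m ∧ 0 < a ∧ P = minpoly R x ^ m * (X - C t) ^ a ∧
        (minpoly R x).natDegree = 2 := by
  have hint : IsIntegral R x := ⟨P, hP, hx⟩
  obtain ⟨m, g, hm, hg, hPg, hxg⟩ := exists_eq_minpoly_pow_mul hP hx
  have hfs : ((minpoly R x).map (algebraMap R K)).Splits := hs.of_dvd (hP.map _).ne_zero <|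
    Polynomial.map_dvd _ (minpoly.isIntegrallyClosed_dvd hint hx)
  have hgs : (g.map (algebraMap R K)).Splits := hs.of_dvd (hP.map _).ne_zero <|
    Polynomial.map_dvd _ (hPg ▸ dvd_mul_left g _)
  have hcard := ncard_rootSet_minpoly_pow_mul hint hfs hm.ne' hg hxg
  rw [← hPg, h3] at hcard
  have hdeg := (minpoly.two_le_natDegree_iff hint).2 hxR
  obtain hg0 | hg1 : (g.rootSet K).ncard = 0 ∨ (g.rootSet K).ncard = 1 := by omega
  · have hg' : g = 1 :=
      eq_one_of_splits_of_rootSet_eq_empty hg hgs ((Set.ncard_eq_zero (rootSet_finite g K)).1 hg0)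
    exact .inl ⟨m, by simpa [hg'] using hPg, by omega⟩
  · obtain ⟨a, t, ha, ht⟩ := exists_eq_X_sub_C_pow_of_ncard_rootSet_eq_one hg hgs hg1
    exact .inr ⟨m, a, t, hm, ha, ht ▸ hPg, by omega⟩

end MinimalPolynomial

lemma exists_eq_quadratic_of_monic {R : Type*} [Semiring R] {f : R[X]} (hf : f.Monic)
    (hdeg : f.natDegree = 2) : ∃ p q, f = X ^ 2 + C p * X + C q := by
  refine ⟨f.coeff 1, f.coeff 0, ?_⟩
  have hlead : f.coeff 2 = 1 := hdeg ▸ hf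
  simpa [hlead] using eq_quadratic_of_degree_le_two (natDegree_le_iff_degree_le.1 hdeg.le)

lemma natDegree_quadratic_pow_mul_X_sub_C_pow {R : Type*} [CommRing R] [Nontrivial R]
    (p q t : R) (m a : ℕ) :
    ((X ^ 2 + C p * X + C q) ^ m * (X - C t) ^ a).natDegree = 2 * m + a := by
  have hmonic : (X ^ 2 + C p * X + C q).Monic := by monicity!
  have hdeg : (X ^ 2 + C p * X + C q).natDegree = 2 := by compute_degree!
  rw [(hmonic.pow m).natDegree_mul ((monic_X_sub_C t).pow a), hmonic.natDegree_pow, hdeg,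
    (monic_X_sub_C t).natDegree_pow, natDegree_X_sub_C]
  ring

section PowerSums

variable {R K : Type*} [CommRing R] [Field K] [Algebra R K] {p q : R}

lemma exists_aroots_quadratic_eq_pair
    (hs : ((X ^ 2 + C p * X + C q).map (algebraMap R K)).Splits) :
    ∃ x y : K, (X ^ 2 + C p * X + C q).aroots K = {x, y} ∧ x + y = -algebraMap R K p ∧
      x * y = algebraMap R K q := by
  have := (algebraMap R K).domain_nontrivial
  have hmonic : (X ^ 2 + C p * X + C q).Monic := by monicity!
  have hcard : ((X ^ 2 + C p * X + C q).aroots K).card = 2 := by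
    rw [aroots_def, ← hs.natDegree_eq_card_roots, hmonic.natDegree_map]
    compute_degree!
  obtain ⟨x, y, hxy⟩ := Multiset.card_eq_two.1 hcard
  have hvieta := aroots_quadratic_eq_pair_iff_of_ne_zero' (a := (1 : R)) (b := p) (c := q)
    (x1 := x) (x2 := y) (by simp)
  exact ⟨x, y, hxy, by simpa [hxy] using hvieta⟩

lemma aroots_pow_mul_X_sub_C_pow {f : R[X]} (hf : f.Monic) (t : R) (m a : ℕ) :
    (f ^ m * (X - C t) ^ a).aroots K = m • f.aroots K + a • {algebraMap R K t} := by
  have := (algebraMap R K).domain_nontrivial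
  have hne := (((hf.pow m).mul ((monic_X_sub_C t).pow a)).map (algebraMap R K)).ne_zero
  rw [Polynomial.map_mul] at hne
  rw [aroots_def, Polynomial.map_mul, roots_mul hne]
  simp [Polynomial.map_pow]

lemma sum_aroots_quadratic_pow_mul_X_sub_C_pow (t : R) (m a : ℕ)
    (hs : ((X ^ 2 + C p * X + C q).map (algebraMap R K)).Splits) :
    (((X ^ 2 + C p * X + C q) ^ m * (X - C t) ^ a).aroots K).sum =
      algebraMap R K (a * t - m * p) := by
  obtain ⟨x, y, hxy, hadd, -⟩ := exists_aroots_quadratic_eq_pair hs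
  rw [aroots_pow_mul_X_sub_C_pow (by monicity!), hxy]
  simp only [Multiset.sum_add, Multiset.sum_nsmul, Multiset.insert_eq_cons, Multiset.sum_cons,
    Multiset.sum_singleton, nsmul_eq_mul, map_sub, map_mul, map_natCast]
  linear_combination m * hadd

lemma sum_sq_aroots_quadratic_pow_mul_X_sub_C_pow (t : R) (m a : ℕ)
    (hs : ((X ^ 2 + C p * X + C q).map (algebraMap R K)).Splits) :
    ((((X ^ 2 + C p * X + C q) ^ m * (X - C t) ^ a).aroots K).map (· ^ 2)).sum =
      algebraMap R K (m * (p ^ 2 - 2 * q) + a * t ^ 2) := by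
  obtain ⟨x, y, hxy, hadd, hmul⟩ := exists_aroots_quadratic_eq_pair hs
  rw [aroots_pow_mul_X_sub_C_pow (by monicity!), hxy]
  simp only [Multiset.map_add, Multiset.map_nsmul, Multiset.sum_add, Multiset.sum_nsmul,
    Multiset.insert_eq_cons, Multiset.map_cons, Multiset.map_singleton, Multiset.sum_cons,
    Multiset.sum_singleton, nsmul_eq_mul, map_add, map_sub, map_mul, map_pow, map_natCast,
    map_ofNat]
  linear_combination m * (x + y - algebraMap R K p) * hadd - 2 * m * hmul

end PowerSums

lemma mul_rootMultiplicity_zero_add_eq_one {R : Type*} [CommRing R] [IsDomain R]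
    {f g : R[X]} {m k : ℕ} (h : f ^ m * g = X * (X + 1) ^ k) :
    m * f.rootMultiplicity 0 + g.rootMultiplicity 0 = 1 := by
  classical
  have hne : X * (X + 1) ^ k ≠ (0 : R[X]) :=
    mul_ne_zero X_ne_zero (pow_ne_zero k (X_add_C_ne_zero 1))
  have hX : (X * (X + 1) ^ k : R[X]).roots.count 0 = 1 := by
    rw [roots_mul hne, ← C_1, roots_pow, roots_X_add_C]
    simp [-count_roots]
  rw [← h, roots_mul (h ▸ hne), roots_pow] at hX
  simpa only [Multiset.count_add, Multiset.count_nsmul, count_roots] using hX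

lemma exponent_eq_one_of_pow_mul_eq_X_mul_X_add_one_pow {p q t : ZMod 2} {m a k : ℕ}
    (ha : a ≠ 0) (hk : k ≠ 0)
    (h : (X ^ 2 + C p * X + C q) ^ m * (X - C t) ^ a = X * (X + 1) ^ k) :
    a = 1 ∧ p = 0 ∨ m = 1 ∧ t = 1 := by
  have hmul := mul_rootMultiplicity_zero_add_eq_one h
  have heval : (1 + p + q) ^ m * (1 - t) ^ a = 0 := by
    simpa [CharTwo.add_self_eq_zero, hk] using congrArg (eval 1) h
  obtain rfl | rfl : t = 0 ∨ t = 1 := by clear h hmul heval; decide +revert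
  · left
    rw [rootMultiplicity_X_sub_C_pow] at hmul
    obtain ⟨hm, hpq⟩ : m ≠ 0 ∧ 1 + p + q = 0 := by simp_all
    have hroot : (X ^ 2 + C p * X + C q).rootMultiplicity 0 = 0 :=
      (Nat.mul_eq_zero.1 (by omega)).resolve_left hm
    have hq : q ≠ 0 := by
      have hmonic : (X ^ 2 + C p * X + C q).Monic := by monicity!
      simpa [rootMultiplicity_eq_zero_iff, hmonic.ne_zero] using hroot
    exact ⟨by simpa [hroot] using hmul, by clear * - hq hpq; decide +revert⟩
  · right
    rw [rootMultiplicity_eq_zero (p := (X - C 1) ^ a) (by simp)] at hmul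
    exact ⟨Nat.eq_one_of_mul_eq_one_right hmul, rfl⟩

open Matrix in
lemma charpoly_vecMulVec_one_sub_one {R ι : Type*} [CommRing R] [Fintype ι] [DecidableEq ι]
    [Nonempty ι] :
    (vecMulVec 1 1 - 1 : Matrix ι ι R).charpoly =
      (X + 1 - C (Fintype.card ι : R)) * (X + 1) ^ (Fintype.card ι - 1) := by
  have h := charpoly_sub_scalar (vecMulVec 1 1 : Matrix ι ι R) 1
  rw [map_one] at h
  rw [h, charpoly_vecMulVec]
  obtain ⟨k, hk⟩ := Nat.exists_eq_succ_of_ne_zero (Fintype.card_ne_zero (α := ι))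
  simp only [hk, one_dotProduct_one, smul_eq_C_mul, Nat.succ_eq_add_one, Nat.cast_add,
    Nat.cast_one, map_add, map_natCast, map_one, add_tsub_cancel_right, sub_comp, mul_comp,
    pow_comp, X_comp, add_comp, natCast_comp, one_comp, add_sub_add_right_eq_sub]
  ring

lemma charpoly_map_zmod_two_of_odd_card {ι : Type*} [Fintype ι] [DecidableEq ι]
    (hι : Odd (Fintype.card ι)) {T : Matrix ι ι ℤ} (hdiag : ∀ i, Even (T i i))
    (hoff : ∀ i j, i ≠ j → Odd (T i j)) :
    T.charpoly.map (Int.castRingHom (ZMod 2)) = X * (X + 1) ^ (Fintype.card ι - 1) := by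
  have : Nonempty ι := Fintype.card_pos_iff.1 hι.pos
  have hT : T.map (Int.castRingHom (ZMod 2)) = Matrix.vecMulVec 1 1 - 1 := by
    ext i j
    by_cases hij : i = j
    · subst hij
      simp [ZMod.intCast_eq_zero_iff_even.2 (hdiag i)]
    · simp [ZMod.intCast_eq_one_iff_odd.2 (hoff i j hij), hij]
  rw [← Matrix.charpoly_map, hT, charpoly_vecMulVec_one_sub_one,
    ZMod.natCast_eq_one_iff_odd.2 hι]
  simp

lemma coeff_eq_of_power_sums_of_even {m p q t : ℤ} (hm : 0 < m) (hsum : t = m * p)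
    (hsq : m * (p ^ 2 - 2 * q) + t ^ 2 = (2 * m + 1) * (2 * m)) (hp : Even p)
    (hdisc : 0 < discrim 1 p q) : p = 0 ∧ t = 0 ∧ q = -(2 * m + 1) := by
  subst hsum
  have hdisc_eq : discrim 1 p q = (2 * m + 1) * (2 ^ 2 - p ^ 2) :=
    mul_left_cancel₀ hm.ne' (by rw [discrim]; linear_combination 2 * hsq)
  rw [hdisc_eq] at hdisc
  have hlt : |p| < 2 := abs_lt_of_sq_lt_sq (by nlinarith) (by norm_num)
  obtain ⟨r, rfl⟩ := hp
  obtain rfl : r = 0 := by grind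
  rw [discrim] at hdisc_eq
  exact ⟨rfl, by ring, by linarith⟩

lemma isSquare_discrim_of_power_sums_of_odd {a p q t : ℤ} (ha : 0 < a) (hsum : p = a * t)
    (hsq : p ^ 2 - 2 * q + a * t ^ 2 = (a + 2) * (a + 1)) (ht : Odd t)
    (hdisc : 0 < discrim 1 p q) : IsSquare (discrim 1 p q) := by
  have hdisc_eq : discrim 1 p q = (a + 2) * (2 * (a + 1) - a * t ^ 2) := by
    rw [discrim]
    linear_combination 2 * hsq - (p + a * t) * hsum
  have hlt : |t| < 3 := by
    rw [hdisc_eq] at hdisc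
    refine abs_lt_of_sq_lt_sq ?_ (by norm_num)
    nlinarith [pos_of_mul_pos_right hdisc (by linarith)]
  have ht1 : t ^ 2 = 1 := by
    obtain rfl | rfl : t = 1 ∨ t = -1 := by grind
    all_goals norm_num
  exact ⟨a + 2, by rw [hdisc_eq, ht1]; ring⟩

lemma discrim_pos_and_not_isSquare_of_irrational {p q : ℤ} {x : ℝ}
    (hx : x ^ 2 + p * x + q = 0) (hirr : Irrational x) :
    0 < discrim 1 p q ∧ ¬ IsSquare (discrim 1 p q) := by
  have hdisc : ((discrim 1 p q : ℤ) : ℝ) = (2 * x + p) ^ 2 := by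
    simp only [discrim]
    push_cast
    linear_combination -4 * hx
  have hirr' : Irrational (2 * x + p) := by
    exact_mod_cast (hirr.intCast_mul two_ne_zero).add_intCast p
  refine ⟨by exact_mod_cast hdisc ▸ sq_pos_of_ne_zero hirr'.ne_zero, fun ⟨s, hs⟩ ↦ ?_⟩
  rw [hs, ← sq, Int.cast_pow] at hdisc
  rcases sq_eq_sq_iff_eq_or_eq_neg.1 hdisc.symm with h | h
  · exact hirr'.ne_int s h
  · exact hirr'.ne_int (-s) (by simpa using h)

lemma coeff_eq_of_power_sums_of_map_zmod_two {m a : ℕ} {p q t : ℤ} (hm : 0 < m) (ha : 0 < a)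
    (hmod : ((X ^ 2 + C p * X + C q) ^ m * (X - C t) ^ a).map (Int.castRingHom (ZMod 2)) =
      X * (X + 1) ^ (2 * m + a - 1))
    (hsum : a * t - m * p = 0)
    (hsq : m * (p ^ 2 - 2 * q) + a * t ^ 2 = (2 * m + a) * (2 * m + a - 1))
    (hdisc : 0 < discrim 1 p q) (hirr : ¬ IsSquare (discrim 1 p q)) :
    a = 1 ∧ p = 0 ∧ t = 0 ∧ q = -(2 * m + 1) := by
  simp only [Polynomial.map_mul, Polynomial.map_pow, Polynomial.map_add, Polynomial.map_sub,
    map_X, map_C, Int.coe_castRingHom] at hmod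
  obtain ⟨rfl, hp⟩ | ⟨rfl, ht⟩ :=
    exponent_eq_one_of_pow_mul_eq_X_mul_X_add_one_pow ha.ne' (by omega) hmod
  · refine ⟨rfl, coeff_eq_of_power_sums_of_even (m := m) (by exact_mod_cast hm) ?_ ?_
      (ZMod.intCast_eq_zero_iff_even.1 hp) hdisc⟩
    · push_cast at hsum; linarith
    · push_cast at hsq; linarith
  · refine absurd (isSquare_discrim_of_power_sums_of_odd (a := a) (t := t)
      (by exact_mod_cast ha) ?_ ?_ (ZMod.intCast_eq_one_iff_odd.1 ht) hdisc) hirr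
    · push_cast at hsum; linarith
    · push_cast at hsq; linarith

section Eigenvalues

variable {𝕜 ι : Type*} [RCLike 𝕜] [Fintype ι] [DecidableEq ι] {A : Matrix ι ι 𝕜}

lemma trace_pow_eq_sum_eigenvalues_pow (hA : A.IsHermitian) (k : ℕ) :
    (A ^ k).trace = ∑ i, (hA.eigenvalues i : 𝕜) ^ k := by
  conv_lhs => rw [hA.spectral_theorem, ← map_pow, Unitary.conjStarAlgAut_apply,
    Matrix.trace_mul_cycle]
  simp [Matrix.diagonal_pow]

lemma card_filter_eigenvalues_eq_count_roots [DecidableEq 𝕜] (hA : A.IsHermitian) (x : ℝ) :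
    (Finset.univ.filter fun i ↦ hA.eigenvalues i = x).card = A.charpoly.roots.count (x : 𝕜) := by
  rw [hA.roots_charpoly_eq_eigenvalues, Multiset.count_map]
  simp only [Function.comp_apply, RCLike.ofReal_inj, eq_comm (a := x)]
  rfl

lemma card_image_eigenvalues_eq_card_roots [DecidableEq 𝕜] (hA : A.IsHermitian) :
    (Finset.univ.image hA.eigenvalues).card = A.charpoly.roots.toFinset.card := by
  rw [hA.roots_charpoly_eq_eigenvalues, ← Multiset.map_map, Multiset.toFinset_map,
    Finset.card_image_of_injective _ RCLike.ofReal_injective]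
  rfl

end Eigenvalues

lemma charpoly_fin_three {R : Type*} [CommRing R] {A : Matrix (Fin 3) (Fin 3) R} (hA : A.IsSymm)
    (hdiag : ∀ i, A i i = 0) (hoff : ∀ i j, i ≠ j → A i j ^ 2 = 1) :
    A.charpoly = (X - C (2 * (A 0 1 * A 0 2 * A 1 2))) * (X + C (A 0 1 * A 0 2 * A 1 2)) ^ 2 := by
  have hC {i j} (hij : i ≠ j) : C (A i j) ^ 2 = 1 := by rw [← C_pow, hoff i j hij, C_1]
  have h01 := hC (i := 0) (j := 1) (by decide)
  have h02 := hC (i := 0) (j := 2) (by decide)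
  have h12 := hC (i := 1) (j := 2) (by decide)
  rw [Matrix.charpoly, Matrix.det_fin_three]
  simp only [Fin.isValue, Matrix.charmatrix_apply_eq, hdiag, map_zero, sub_zero, ne_eq,
    Fin.reduceEq, not_false_eq_true, Matrix.charmatrix_apply_ne, zero_ne_one, one_ne_zero,
    hA.apply 0 1, hA.apply 0 2, hA.apply 1 2, map_mul, map_ofNat]
  generalize C (A 0 1) = a at *
  generalize C (A 0 2) = b at *
  generalize C (A 1 2) = c at *
  grind

lemma roots_X_mul_X_sq_sub_C_sq_pow {R : Type*} [CommRing R] [IsDomain R] (s : R) (m : ℕ) :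
    (X * (X ^ 2 - C (s ^ 2)) ^ m).roots = {0} + m • {s, -s} := by
  have hfac : X ^ 2 - C (s ^ 2) = (X - C s) * (X - C (-s)) := by
    simp only [C_pow, C_neg]; ring
  have hmul : (X - C s) * (X - C (-s)) ≠ 0 :=
    mul_ne_zero (X_sub_C_ne_zero s) (X_sub_C_ne_zero (-s))
  rw [hfac, roots_mul (mul_ne_zero X_ne_zero (pow_ne_zero m hmul)), roots_pow, roots_X,
    roots_mul hmul, roots_X_sub_C, roots_X_sub_C]
  rfl

lemma quadratic_pow_mul_X_sub_C_pow_eq_of_power_sums {m a : ℕ} {p q t : ℤ} (hm : 0 < m)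
    (ha : 0 < a) (hs : ((X ^ 2 + C p * X + C q).map (algebraMap ℤ ℝ)).Splits) {x : ℝ}
    (hx : x ^ 2 + p * x + q = 0) (hirr : Irrational x)
    (hmod : ((X ^ 2 + C p * X + C q) ^ m * (X - C t) ^ a).map (Int.castRingHom (ZMod 2)) =
      X * (X + 1) ^ (2 * m + a - 1))
    (hsum : (((X ^ 2 + C p * X + C q) ^ m * (X - C t) ^ a).aroots ℝ).sum = 0)
    (hsq : ((((X ^ 2 + C p * X + C q) ^ m * (X - C t) ^ a).aroots ℝ).map (· ^ 2)).sum =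
      (2 * m + a : ℕ) * ((2 * m + a : ℕ) - 1 : ℝ)) :
    a = 1 ∧ (X ^ 2 + C p * X + C q) ^ m * (X - C t) ^ a =
      X * (X ^ 2 - C (2 * m + 1 : ℤ)) ^ m := by
  rw [sum_aroots_quadratic_pow_mul_X_sub_C_pow t m a hs, eq_intCast] at hsum
  rw [sum_sq_aroots_quadratic_pow_mul_X_sub_C_pow t m a hs, eq_intCast] at hsq
  obtain ⟨hdisc, hnsq⟩ := discrim_pos_and_not_isSquare_of_irrational hx hirr
  obtain ⟨rfl, rfl, rfl, rfl⟩ := coeff_eq_of_power_sums_of_map_zmod_two hm ha hmod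
    (by exact_mod_cast hsum) (by push_cast at hsq; rify; exact hsq) hdisc hnsq
  refine ⟨rfl, ?_⟩
  rw [C_neg, C_0]
  ring

theorem eq_X_mul_X_sq_sub_C_pow_of_power_sums {P : ℤ[X]} (hP : P.Monic)
    (hs : (P.map (algebraMap ℤ ℝ)).Splits) (h3 : (P.rootSet ℝ).ncard = 3) {x : ℝ}
    (hx : aeval x P = 0) (hirr : Irrational x) (hdeg : P.natDegree ≠ 3)
    (hmod : P.map (Int.castRingHom (ZMod 2)) = X * (X + 1) ^ (P.natDegree - 1))
    (hsum : (P.aroots ℝ).sum = 0)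
    (hsq : ((P.aroots ℝ).map (· ^ 2)).sum = P.natDegree * (P.natDegree - 1 : ℝ)) :
    P = X * (X ^ 2 - C (P.natDegree : ℤ)) ^ ((P.natDegree - 1) / 2) := by
  have hxZ : x ∉ (algebraMap ℤ ℝ).range := fun ⟨k, hk⟩ ↦ hirr.ne_int k hk.symm
  obtain ⟨m, hPm, hf⟩ | ⟨m, a, t, hm, ha, hPm, hf⟩ :=
    eq_minpoly_pow_or_eq_minpoly_pow_mul_X_sub_C_pow hP hs h3 hx hxZ
  · rw [hPm, Polynomial.map_pow, ← mul_one (_ ^ m)] at hmod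
    have hmul := mul_rootMultiplicity_zero_add_eq_one hmod
    rw [← C_1, rootMultiplicity_C, add_zero] at hmul
    exact absurd (by rw [hPm, Nat.eq_one_of_mul_eq_one_right hmul, pow_one, hf]) hdeg
  · have hint : IsIntegral ℤ x := ⟨P, hP, hx⟩
    obtain ⟨p, q, hpq⟩ := exists_eq_quadratic_of_monic (minpoly.monic hint) hf
    have hfs : ((minpoly ℤ x).map (algebraMap ℤ ℝ)).Splits := hs.of_dvd (hP.map _).ne_zero <|
      Polynomial.map_dvd _ (minpoly.isIntegrallyClosed_dvd hint hx)
    have hfx : x ^ 2 + p * x + q = 0 := by simpa [hpq] using minpoly.aeval ℤ x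
    rw [hpq] at hPm hfs
    have hn : P.natDegree = 2 * m + a := by
      rw [hPm, natDegree_quadratic_pow_mul_X_sub_C_pow]
    rw [hn] at hmod hsq
    rw [hPm] at hmod hsum hsq
    obtain ⟨rfl, hPX⟩ :=
      quadratic_pow_mul_X_sub_C_pow_eq_of_power_sums hm ha hfs hfx hirr hmod hsum hsq
    rw [hn, hPm, hPX]
    simp

namespace IsSeidel

variable {n : ℕ} {S : Matrix (Fin n) (Fin n) ℝ}

lemma isHermitian (hS : IsSeidel S) : S.IsHermitian := by
  simpa [Matrix.IsHermitian] using hS.1.eq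

lemma sum_roots_charpoly (hS : IsSeidel S) : S.charpoly.roots.sum = 0 := by
  rw [← Matrix.trace_eq_sum_roots_charpoly_of_splits hS.isHermitian.splits_charpoly]
  simp [Matrix.trace, hS.2.1]

lemma sq_apply_eq_one_of_ne (hS : IsSeidel S) {i j : Fin n} (hij : i ≠ j) : S i j ^ 2 = 1 :=
  sq_eq_one_iff.2 (hS.2.2 i j hij)

lemma trace_sq (hS : IsSeidel S) : (S ^ 2).trace = n * (n - 1) := by
  have hentry (i j : Fin n) : S i j * S j i = 1 - if i = j then 1 else 0 := by
    rw [hS.1.apply i j, ← sq]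
    by_cases h : i = j
    · subst h; simp [hS.2.1]
    · simp [hS.sq_apply_eq_one_of_ne h, h]
  simp [sq, Matrix.trace, Matrix.mul_apply, hentry, mul_sub]

lemma sum_sq_roots_charpoly (hS : IsSeidel S) :
    (S.charpoly.roots.map (· ^ 2)).sum = (n * (n - 1) : ℝ) := by
  rw [← hS.trace_sq, trace_pow_eq_sum_eigenvalues_pow hS.isHermitian,
    hS.isHermitian.roots_charpoly_eq_eigenvalues, Multiset.map_map]
  rfl

lemma exists_charpoly_eq_map_int (hS : IsSeidel S) (hn : Odd n) :
    ∃ P : ℤ[X], P.Monic ∧ P.map (algebraMap ℤ ℝ) = S.charpoly ∧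
      P.map (Int.castRingHom (ZMod 2)) = X * (X + 1) ^ (n - 1) := by
  have hfloor : ⌊(-1 : ℝ)⌋ = -1 := by norm_num
  have hST : (S.map Int.floor).map (algebraMap ℤ ℝ) = S := by
    ext i j
    by_cases hij : i = j
    · subst hij
      simp [hS.2.1]
    · rcases hS.2.2 i j hij with h | h <;> simp [h, hfloor]
  refine ⟨(S.map Int.floor).charpoly, Matrix.charpoly_monic _, ?_, ?_⟩
  · rw [← Matrix.charpoly_map, hST]
  · rw [charpoly_map_zmod_two_of_odd_card (by simpa using hn), Fintype.card_fin]
    · simp [hS.2.1]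
    · intro i j hij
      rcases hS.2.2 i j hij with h | h <;> simp [h, hfloor]

lemma ne_three_of_irrational_root (hS : IsSeidel S) {x : ℝ} (hx : S.charpoly.IsRoot x)
    (hirr : Irrational x) : n ≠ 3 := by
  rintro rfl
  have hsign : S 0 1 * S 0 2 * S 1 2 = 1 ∨ S 0 1 * S 0 2 * S 1 2 = -1 := by
    rw [← sq_eq_one_iff, mul_pow, mul_pow]
    simp [hS.sq_apply_eq_one_of_ne]
  rw [charpoly_fin_three hS.1 hS.2.1 fun i j ↦ hS.sq_apply_eq_one_of_ne] at hx
  generalize S 0 1 * S 0 2 * S 1 2 = s at hsign hx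
  have hxs : x = 2 * s ∨ x = -s := by
    simpa [sub_eq_zero, add_eq_zero_iff_eq_neg] using hx
  rcases hsign with rfl | rfl <;> rcases hxs with rfl | rfl
  · exact hirr.ne_int 2 (by norm_num)
  · exact hirr.ne_int (-1) (by norm_num)
  · exact hirr.ne_int (-2) (by norm_num)
  · exact hirr.ne_int 1 (by norm_num)

theorem charpoly_eq_X_mul_X_sq_sub_C_pow (hS : IsSeidel S) (hn : Odd n)
    (h3 : S.charpoly.roots.toFinset.card = 3) {x : ℝ} (hx : S.charpoly.IsRoot x)
    (hirr : Irrational x) : S.charpoly = X * (X ^ 2 - C (n : ℝ)) ^ ((n - 1) / 2) := by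
  obtain ⟨P, hP, hPS, hmod⟩ := hS.exists_charpoly_eq_map_int hn
  have hdeg : P.natDegree = n := by
    rw [← hP.natDegree_map (algebraMap ℤ ℝ), hPS, Matrix.charpoly_natDegree_eq_dim,
      Fintype.card_fin]
  have hroots : P.aroots ℝ = S.charpoly.roots := by rw [aroots_def, hPS]
  have hcard : (P.rootSet ℝ).ncard = 3 := by
    rw [rootSet_def, Set.ncard_coe_finset, hroots, h3]
  have hxP : aeval x P = 0 := by rwa [← eval_map_algebraMap, hPS]
  have hPn := eq_X_mul_X_sq_sub_C_pow_of_power_sums hP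
    (hPS ▸ hS.isHermitian.splits_charpoly) hcard hxP hirr
    (hdeg.trans_ne (hS.ne_three_of_irrational_root hx hirr)) (hdeg.symm ▸ hmod)
    (hroots ▸ hS.sum_roots_charpoly) (by rw [hroots, hdeg, hS.sum_sq_roots_charpoly])
  rw [hdeg] at hPn
  rw [← hPS]
  simpa [Polynomial.map_pow] using congrArg (Polynomial.map (algebraMap ℤ ℝ)) hPn

end IsSeidel

theorem seidel_odd_irrational_spectrum {n : ℕ} (hn : Odd n)
    (S : Matrix (Fin n) (Fin n) ℝ) (hS : IsSeidel S) (hH : S.IsHermitian)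
    (h3 : (Finset.univ.image hH.eigenvalues).card = 3)
    (hirr : ∃ i, Irrational (hH.eigenvalues i)) :
    (Finset.univ.filter fun i => hH.eigenvalues i = -Real.sqrt n).card = (n - 1) / 2 ∧
    (Finset.univ.filter fun i => hH.eigenvalues i = 0).card = 1 ∧
    (Finset.univ.filter fun i => hH.eigenvalues i = Real.sqrt n).card = (n - 1) / 2 := by
  obtain ⟨i, hi⟩ := hirr
  have hroot : S.charpoly.IsRoot (hH.eigenvalues i) :=
    Matrix.mem_spectrum_iff_isRoot_charpoly.1 (hH.eigenvalues_mem_spectrum_real i)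
  have hroots : S.charpoly.roots = {0} + ((n - 1) / 2) • {√n, -√n} := by
    rw [card_image_eigenvalues_eq_card_roots] at h3
    rw [hS.charpoly_eq_X_mul_X_sq_sub_C_pow hn h3 hroot hi,
      ← roots_X_mul_X_sq_sub_C_sq_pow, Real.sq_sqrt n.cast_nonneg]
  have hne : √n ≠ 0 := (Real.sqrt_pos.2 (Nat.cast_pos.2 hn.pos)).ne'
  have hneg : -√n ≠ √n := neg_ne_self.2 hne
  simp only [card_filter_eigenvalues_eq_count_roots, hroots]
  simp [hn.pos.ne', hne.symm, hneg, hneg.symm]
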